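/- Let σ > 0, α > 1 be real numbers, p, k natural numbers, and μ, μ' : Fin p → ℝ with ∑_{j} (μ j - μ' j)² ≤ 2k. Then (1/(α-1)) · log( ∫_{ℝ^p} ∏_{j} (φ_{μ j, σ²}(x j))^α · (φ_{μ' j, σ²}(x j))^{1-α} dx ) ≤ α·k/σ², where φ_{m,σ²}(x) = (1/(σ√(2π))) · exp(-(x-m)²/(2σ²)) is the density of the normal distribution N(m, σ²). -/

import Mathlib

open MeasureTheory Real Finset

/-- Density of the normal distribution `N(m, σ²)`. -/
noncomputable def normalPdf (m σ x : ℝ) : ℝ :=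
  (1 / (σ * Real.sqrt (2 * Real.pi))) * Real.exp (-(x - m) ^ 2 / (2 * σ ^ 2))

/-! Completing the square shows that `φ_{m,σ²}^α φ_{m',σ²}^{1-α}` is a multiple of the normal
density with mean `αm + (1-α)m'`, the factor being `exp(α(α-1)(m-m')²/(2σ²))`. Hence the Rényi
divergence of two normal densities is `α(m-m')²/(2σ²)`. It is additive over independent coordinates,
so that of two product densities is `α/2` times the sum of the squares `((μ j - μ' j)/σ j)²`. -/

/-- The Rényi divergence of order `α` between the distributions with densities `f` and `g` with
respect to `ν`. It is real-valued: it is `0` at `α = 1` and where the integral diverges. -/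
noncomputable def renyiDiv {Ω : Type*} [MeasurableSpace Ω] (α : ℝ) (ν : Measure Ω)
    (f g : Ω → ℝ) : ℝ :=
  1 / (α - 1) * log (∫ x, f x ^ α * g x ^ (1 - α) ∂ν)

section Product

variable {ι : Type*} [Fintype ι]

lemma prod_rpow_mul_prod_rpow {a b : ι → ℝ} (ha : ∀ i, 0 ≤ a i) (hb : ∀ i, 0 ≤ b i) (s t : ℝ) :
    (∏ i, a i) ^ s * (∏ i, b i) ^ t = ∏ i, a i ^ s * b i ^ t := by
  rw [prod_mul_distrib, finsetProd_rpow _ _ fun i _ => ha i, finsetProd_rpow _ _ fun i _ => hb i]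

lemma renyiDiv_pi {Ω : ι → Type*} [∀ i, MeasurableSpace (Ω i)] {ν : ∀ i, Measure (Ω i)}
    [∀ i, SigmaFinite (ν i)] {α : ℝ} {f g : ∀ i, Ω i → ℝ} (hf : ∀ i x, 0 ≤ f i x)
    (hg : ∀ i x, 0 ≤ g i x) (hfg : ∀ i, ∫ x, f i x ^ α * g i x ^ (1 - α) ∂ν i ≠ 0) :
    renyiDiv α (Measure.pi ν) (fun x => ∏ i, f i (x i)) (fun x => ∏ i, g i (x i)) =
      ∑ i, renyiDiv α (ν i) (f i) (g i) := by
  simp only [renyiDiv, prod_rpow_mul_prod_rpow (fun i => hf i _) (fun i => hg i _)]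
  rw [integral_fintype_prod_eq_prod fun i x => f i x ^ α * g i x ^ (1 - α),
    log_prod fun i _ => hfg i, mul_sum]

end Product

section Normal

variable {σ : ℝ}

lemma normalPdf_pos (hσ : 0 < σ) (m x : ℝ) : 0 < normalPdf m σ x := by
  unfold normalPdf
  positivity

lemma normalPdf_eq_gaussianPDFReal (hσ : 0 ≤ σ) (m : ℝ) :
    normalPdf m σ = ProbabilityTheory.gaussianPDFReal m (σ ^ 2).toNNReal := by
  ext x
  rw [normalPdf, ProbabilityTheory.gaussianPDFReal, coe_toNNReal _ (sq_nonneg σ),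
    sqrt_mul (by positivity) (σ ^ 2), sqrt_sq hσ, one_div, mul_comm σ]

lemma integral_normalPdf (hσ : 0 < σ) (m : ℝ) : ∫ x, normalPdf m σ x = 1 := by
  rw [normalPdf_eq_gaussianPDFReal hσ.le]
  exact ProbabilityTheory.integral_gaussianPDFReal_eq_one m (toNNReal_pos.2 (by positivity)).ne'

lemma normalPdf_rpow_mul_normalPdf_rpow (hσ : 0 < σ) (α m m' x : ℝ) :
    normalPdf m σ x ^ α * normalPdf m' σ x ^ (1 - α) =
      exp (α * (α - 1) * (m - m') ^ 2 / (2 * σ ^ 2)) *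
        normalPdf (α * m + (1 - α) * m') σ x := by
  unfold normalPdf
  set c := 1 / (σ * √(2 * π))
  have hc : 0 < c := by positivity
  have normalization : c ^ α * c ^ (1 - α) = c := by
    rw [← rpow_add hc, add_sub_cancel, rpow_one]
  have complete_square :
      -(x - m) ^ 2 / (2 * σ ^ 2) * α + -(x - m') ^ 2 / (2 * σ ^ 2) * (1 - α) =
        α * (α - 1) * (m - m') ^ 2 / (2 * σ ^ 2) +
          -(x - (α * m + (1 - α) * m')) ^ 2 / (2 * σ ^ 2) := by
    field_simp
    ring
  rw [mul_rpow hc.le (exp_nonneg _), mul_rpow hc.le (exp_nonneg _), mul_mul_mul_comm,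
    normalization, ← exp_mul, ← exp_mul, ← exp_add, complete_square, exp_add, mul_left_comm]

lemma integral_normalPdf_rpow_mul_normalPdf_rpow (hσ : 0 < σ) (α m m' : ℝ) :
    ∫ x, normalPdf m σ x ^ α * normalPdf m' σ x ^ (1 - α) =
      exp (α * (α - 1) * (m - m') ^ 2 / (2 * σ ^ 2)) := by
  simp_rw [normalPdf_rpow_mul_normalPdf_rpow hσ]
  rw [integral_const_mul, integral_normalPdf hσ, mul_one]

lemma renyiDiv_normalPdf (hσ : 0 < σ) {α : ℝ} (hα : α ≠ 1) (m m' : ℝ) :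
    renyiDiv α volume (normalPdf m σ) (normalPdf m' σ) = α / 2 * ((m - m') / σ) ^ 2 := by
  rw [renyiDiv, integral_normalPdf_rpow_mul_normalPdf_rpow hσ, log_exp]
  have : α - 1 ≠ 0 := sub_ne_zero.2 hα
  field_simp

end Normal

lemma renyiDiv_pi_normalPdf {ι : Type*} [Fintype ι] {σ : ι → ℝ} (hσ : ∀ i, 0 < σ i) {α : ℝ}
    (hα : α ≠ 1) (μ μ' : ι → ℝ) :
    renyiDiv α volume (fun x : ι → ℝ => ∏ i, normalPdf (μ i) (σ i) (x i))
        (fun x => ∏ i, normalPdf (μ' i) (σ i) (x i)) =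
      α / 2 * ∑ i, ((μ i - μ' i) / σ i) ^ 2 := by
  rw [volume_pi, renyiDiv_pi (fun i x => (normalPdf_pos (hσ i) _ x).le)
    (fun i x => (normalPdf_pos (hσ i) _ x).le) fun i => ?_, mul_sum]
  · exact sum_congr rfl fun i _ => renyiDiv_normalPdf (hσ i) hα _ _
  · rw [integral_normalPdf_rpow_mul_normalPdf_rpow (hσ i)]
    exact exp_ne_zero _

theorem stmt_5_general {ι : Type*} [Fintype ι] {σ : ι → ℝ} (hσ : ∀ i, 0 < σ i) {α : ℝ}
    (hα₀ : 0 ≤ α) (hα₁ : α ≠ 1) {μ μ' : ι → ℝ} {ε : ℝ}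
    (hsens : ∑ i, ((μ i - μ' i) / σ i) ^ 2 ≤ 2 * ε) :
    1 / (α - 1) *
        log (∫ x : ι → ℝ,
          ∏ i, normalPdf (μ i) (σ i) (x i) ^ α * normalPdf (μ' i) (σ i) (x i) ^ (1 - α)) ≤
      α * ε := by
  have hpos (m : ι → ℝ) (x : ι → ℝ) (i : ι) : 0 ≤ normalPdf (m i) (σ i) (x i) :=
    (normalPdf_pos (hσ i) _ _).le
  simp only [← prod_rpow_mul_prod_rpow (hpos μ _) (hpos μ' _)]
  calc renyiDiv α volume (fun x : ι → ℝ => ∏ i, normalPdf (μ i) (σ i) (x i))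
        (fun x => ∏ i, normalPdf (μ' i) (σ i) (x i))
      = α / 2 * ∑ i, ((μ i - μ' i) / σ i) ^ 2 := renyiDiv_pi_normalPdf hσ hα₁ μ μ'
    _ ≤ α / 2 * (2 * ε) := by gcongr
    _ = α * ε := by ring

theorem stmt_5 (σ α : ℝ) (hσ : 0 < σ) (hα : 1 < α) (p k : ℕ) (μ μ' : Fin p → ℝ)
    (hsens : ∑ j, (μ j - μ' j) ^ 2 ≤ 2 * k) :
    (1 / (α - 1)) *
        Real.log (∫ x : Fin p → ℝ,
          ∏ j, (normalPdf (μ j) σ (x j)) ^ α * (normalPdf (μ' j) σ (x j)) ^ (1 - α)) ≤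
      α * k / σ ^ 2 := by
  rw [mul_div_assoc]
  refine stmt_5_general (fun _ => hσ) (by linarith) hα.ne' ?_
  simpa only [div_pow, ← sum_div, ← mul_div_assoc] using by gcongr
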